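/- (Theorem 3, safety of the exploration policy.) Suppose the exploration policy π agrees with the safe policy μ outside the exploration window, i.e. π_t = μ_t for all t ∉ [t1, t2], its actions deviate by at most ξ inside the window, i.e. |π_t(s) − μ_t(s)| ≤ ξ for all s ∈ S and all t ∈ [t1, t2], and for every t ∈ [t1, t2] and every s ∈ S the map a ↦ Q^μ_t(s, a) is L_Q-Lipschitz with L_Q = [v_M + γ·(k3 + k4)·p_M]·(k1 + k2). Then for every initial state s0, |V^π_0(s0) − V^μ_0(s0)| ≤ ξ · γ^{t1} · [v_M + γ·(k3 + k4)·p_M]·(k1 + k2) · ΔT, where ΔT = t2 − t1 + 1. -/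

import Mathlib

/-- Value function of a policy `π` in a deterministic finite-horizon decision process:
`fhValue f r γ π n t s` is the value at state `s` and time `t` when `n` time steps
remain until the horizon; thus `V^π_t(s) = fhValue f r γ π (T - t) t s`. -/
def fhValue {S : Type*} (f : ℕ → S → ℝ → S) (r : ℕ → S → ℝ → ℝ) (γ : ℝ)
    (π : ℕ → S → ℝ) : ℕ → ℕ → S → ℝ
  | 0, _, _ => 0
  | n + 1, t, s => r t s (π t s) + γ * fhValue f r γ π n (t + 1) (f t s (π t s))

/-- Q function of a policy `μ` at time `t` with horizon `T`:
`Q^μ_t(s, a) = r_t(s, a) + γ·V^μ_{t+1}(f_t(s, a))`. -/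
def fhQ {S : Type*} (f : ℕ → S → ℝ → S) (r : ℕ → S → ℝ → ℝ) (γ : ℝ)
    (μ : ℕ → S → ℝ) (T t : ℕ) (s : S) (a : ℝ) : ℝ :=
  r t s a + γ * fhValue f r γ μ (T - (t + 1)) (t + 1) (f t s a)

/-!
By the performance difference lemma, `V^π_0(s) - V^μ_0(s)` is the sum over the states `s_t`
visited by `π` of the discounted advantages `γ^t (Q^μ_t(s_t, π_t(s_t)) - Q^μ_t(s_t, μ_t(s_t)))`.
A term vanishes where the two policies agree, and is at most `γ^t L_Q ξ` inside the exploration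
window. Since `γ ≤ 1`, each of the `ΔT` powers `γ^t` left is at most `γ^t1`.
-/

open scoped NNReal

theorem sum_Icc_pow_le_pow_mul {R : Type*} [Semiring R] [PartialOrder R] [IsOrderedRing R] {x : R}
    (hx₀ : 0 ≤ x) (hx₁ : x ≤ 1) (a b : ℕ) :
    ∑ t ∈ Finset.Icc a b, x ^ t ≤ x ^ a * ((b + 1 - a : ℕ) : R) := by
  have hterm : ∀ t ∈ Finset.Icc a b, x ^ t ≤ x ^ a := fun t ht ↦
    pow_le_pow_of_le_one hx₀ hx₁ (Finset.mem_Icc.mp ht).1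
  calc ∑ t ∈ Finset.Icc a b, x ^ t
      ≤ (Finset.Icc a b).card • x ^ a := Finset.sum_le_card_nsmul _ _ _ hterm
    _ = x ^ a * ((b + 1 - a : ℕ) : R) := by rw [Nat.card_Icc, nsmul_eq_mul']

section PerformanceDifference

variable {S : Type*} (f : ℕ → S → ℝ → S) (r : ℕ → S → ℝ → ℝ) (γ : ℝ) (π μ : ℕ → S → ℝ)

/-- The trajectory of a policy `π`: `fhTrajectory f π s t` is the state at time `t` when `π` is
followed from the state `s` at time `0`. The performance difference is a sum along it. -/
def fhTrajectory (s : S) : ℕ → S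
  | 0 => s
  | t + 1 => f t (fhTrajectory s t) (π t (fhTrajectory s t))

/-- The advantage of the action `a` over the action of `μ`, by which policies are compared one step
at a time. It is written `Q^μ_t(s, a) - Q^μ_t(s, μ_t(s))`, which agrees with the usual
`Q^μ_t(s, a) - V^μ_t(s)` for `t < T`, to be a difference of two values of the Lipschitz map
`Q^μ_t(s, ·)`. -/
def fhAdvantage (T t : ℕ) (s : S) (a : ℝ) : ℝ :=
  fhQ f r γ μ T t s a - fhQ f r γ μ T t s (μ t s)

theorem fhValue_sub_fhValue_eq_fhAdvantage_add {T t : ℕ} (ht : t < T) (s : S) :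
    fhValue f r γ π (T - t) t s - fhValue f r γ μ (T - t) t s =
      fhAdvantage f r γ μ T t s (π t s) +
        γ * (fhValue f r γ π (T - (t + 1)) (t + 1) (f t s (π t s)) -
          fhValue f r γ μ (T - (t + 1)) (t + 1) (f t s (π t s))) := by
  obtain ⟨n, rfl⟩ := Nat.exists_eq_add_of_lt ht
  have htime : t + n + 1 - t = t + n + 1 - (t + 1) + 1 := by omega
  rw [htime]
  simp only [fhAdvantage, fhValue, fhQ]
  ring

theorem fhValue_sub_fhValue_eq_sum_fhAdvantage_add {T n : ℕ} (hn : n ≤ T) (s : S) :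
    fhValue f r γ π T 0 s - fhValue f r γ μ T 0 s =
      ∑ t ∈ Finset.range n, γ ^ t *
        fhAdvantage f r γ μ T t (fhTrajectory f π s t) (π t (fhTrajectory f π s t)) +
      γ ^ n * (fhValue f r γ π (T - n) n (fhTrajectory f π s n) -
        fhValue f r γ μ (T - n) n (fhTrajectory f π s n)) := by
  induction n with
  | zero => simp [fhTrajectory]
  | succ n ih =>
    rw [ih (Nat.le_of_succ_le hn), fhValue_sub_fhValue_eq_fhAdvantage_add f r γ π μ hn,
      Finset.sum_range_succ, fhTrajectory]
    ring

theorem performance_difference (T : ℕ) (s : S) :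
    fhValue f r γ π T 0 s - fhValue f r γ μ T 0 s =
      ∑ t ∈ Finset.range T, γ ^ t *
        fhAdvantage f r γ μ T t (fhTrajectory f π s t) (π t (fhTrajectory f π s t)) := by
  simpa [fhValue] using fhValue_sub_fhValue_eq_sum_fhAdvantage_add f r γ π μ (le_refl T) s

variable {f r γ π μ}

theorem abs_fhValue_sub_fhValue_le_sum_of_abs_fhAdvantage_le (hγ : 0 ≤ γ) {T : ℕ} {ε : ℕ → ℝ}
    (hε : ∀ t < T, ∀ s, |fhAdvantage f r γ μ T t s (π t s)| ≤ ε t) (s : S) :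
    |fhValue f r γ π T 0 s - fhValue f r γ μ T 0 s| ≤ ∑ t ∈ Finset.range T, γ ^ t * ε t := by
  rw [performance_difference]
  refine (Finset.abs_sum_le_sum_abs _ _).trans (Finset.sum_le_sum fun t ht ↦ ?_)
  rw [abs_mul, abs_of_nonneg (pow_nonneg hγ t)]
  gcongr
  exact hε t (Finset.mem_range.mp ht) _

theorem exploration_safety_bound_general (hγ : 0 ≤ γ) {T : ℕ} {W : Finset ℕ}
    (hWT : W ⊆ Finset.range T) {ξ : ℝ} {L : ℝ≥0}
    (hout : ∀ t ∉ W, π t = μ t) (hin : ∀ t ∈ W, ∀ s, |π t s - μ t s| ≤ ξ)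
    (hlip : ∀ t ∈ W, ∀ s, LipschitzWith L (fhQ f r γ μ T t s)) (s : S) :
    |fhValue f r γ π T 0 s - fhValue f r γ μ T 0 s| ≤ ξ * L * ∑ t ∈ W, γ ^ t := by
  have hadvantage : ∀ t < T, ∀ s, |fhAdvantage f r γ μ T t s (π t s)| ≤
      if t ∈ W then L * ξ else 0 := by
    intro t _ s
    split_ifs with ht
    · exact (hlip t ht s).dist_le_mul_of_le (hin t ht s)
    · simp [fhAdvantage, hout t ht]
  calc |fhValue f r γ π T 0 s - fhValue f r γ μ T 0 s|
      ≤ ∑ t ∈ Finset.range T, γ ^ t * if t ∈ W then L * ξ else 0 :=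
        abs_fhValue_sub_fhValue_le_sum_of_abs_fhAdvantage_le hγ hadvantage s
    _ = ∑ t ∈ W, γ ^ t * (L * ξ) := by
        simp only [mul_ite, mul_zero, Finset.sum_ite_mem, Finset.inter_eq_right.mpr hWT]
    _ = ξ * L * ∑ t ∈ W, γ ^ t := by
        rw [← Finset.sum_mul]
        ring

end PerformanceDifference

/-- Theorem 3, safety of the exploration policy: if the exploration
policy `π` agrees with the safe policy `μ` outside the window `[t1, t2]`, deviates
by at most `ξ` inside the window, and `a ↦ Q^μ_t(s, a)` is `L_Q`-Lipschitz with
`L_Q = [v_M + γ·(k3 + k4)·p_M]·(k1 + k2)`, then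
`|V^π_0(s0) − V^μ_0(s0)| ≤ ξ·γ^{t1}·[v_M + γ·(k3 + k4)·p_M]·(k1 + k2)·ΔT`
with `ΔT = t2 − t1 + 1`. -/
theorem exploration_safety_bound {S : Type*}
    (f : ℕ → S → ℝ → S) (r : ℕ → S → ℝ → ℝ) (γ : ℝ) (hγ : 0 ≤ γ ∧ γ ≤ 1)
    (T t1 t2 : ℕ) (ht12 : t1 ≤ t2) (ht2T : t2 ≤ T - 1) (hT : 1 ≤ T)
    (ξ vM pM k1 k2 k3 k4 : ℝ) (hξ : 0 < ξ)
    (hvM : 0 < vM) (hpM : 0 < pM)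
    (hk1 : 0 < k1) (hk2 : 0 < k2) (hk3 : 0 < k3) (hk4 : 0 < k4)
    (π μ : ℕ → S → ℝ)
    (hout : ∀ t, (t < t1 ∨ t2 < t) → π t = μ t)
    (hin : ∀ t, t1 ≤ t → t ≤ t2 → ∀ s : S, |π t s - μ t s| ≤ ξ)
    (hlip : ∀ t, t1 ≤ t → t ≤ t2 → ∀ (s : S) (a1 a2 : ℝ),
      |fhQ f r γ μ T t s a1 - fhQ f r γ μ T t s a2| ≤
        (vM + γ * (k3 + k4) * pM) * (k1 + k2) * |a1 - a2|)
    (s0 : S) :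
    |fhValue f r γ π T 0 s0 - fhValue f r γ μ T 0 s0| ≤
      ξ * γ ^ t1 * (vM + γ * (k3 + k4) * pM) * (k1 + k2) * ((t2 - t1 + 1 : ℕ) : ℝ) := by
  have hL : 0 ≤ (vM + γ * (k3 + k4) * pM) * (k1 + k2) := by
    have := hγ.1
    positivity
  have hlipschitz : ∀ t ∈ Finset.Icc t1 t2, ∀ s, LipschitzWith ⟨_, hL⟩ (fhQ f r γ μ T t s) :=
    fun t ht s ↦ .of_dist_le_mul (hlip t (Finset.mem_Icc.mp ht).1 (Finset.mem_Icc.mp ht).2 s)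
  have hwindow : Finset.Icc t1 t2 ⊆ Finset.range T := by grind
  have hagree : ∀ t ∉ Finset.Icc t1 t2, π t = μ t := by grind
  have hdeviation : ∀ t ∈ Finset.Icc t1 t2, ∀ s, |π t s - μ t s| ≤ ξ := by grind
  calc |fhValue f r γ π T 0 s0 - fhValue f r γ μ T 0 s0|
      ≤ ξ * ((vM + γ * (k3 + k4) * pM) * (k1 + k2)) * ∑ t ∈ Finset.Icc t1 t2, γ ^ t :=
        exploration_safety_bound_general hγ.1 hwindow hagree hdeviation hlipschitz s0
    _ ≤ ξ * ((vM + γ * (k3 + k4) * pM) * (k1 + k2)) * (γ ^ t1 * ((t2 + 1 - t1 : ℕ) : ℝ)) := by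
        gcongr
        exact sum_Icc_pow_le_pow_mul hγ.1 hγ.2 t1 t2
    _ = ξ * γ ^ t1 * (vM + γ * (k3 + k4) * pM) * (k1 + k2) * ((t2 - t1 + 1 : ℕ) : ℝ) := by
        rw [Nat.sub_add_comm ht12]
        ring
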